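/- Let V be a random vector uniformly distributed on the sphere of radius r > 0 in ℝ³. Then each coordinate of V is uniformly distributed on the interval [−r, r] (Archimedes' theorem). -/

import Mathlib

open MeasureTheory Metric


theorem arch_norm_sq (x : (EuclideanSpace ℝ (Fin 3))) : ‖x‖ ^ 2 = x 0 ^ 2 + x 1 ^ 2 + x 2 ^ 2 := by
  rw [EuclideanSpace.real_norm_sq_eq, Fin.sum_univ_three]

theorem arch_sphere_pos (r : ℝ) (hr : 0 < r) : (μH[2] : Measure (EuclideanSpace ℝ (Fin 3))) (sphere 0 r) ≠ 0 := by
  intro h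
  let f : (EuclideanSpace ℝ (Fin 3)) → ℝ × ℝ := fun x => (x 0, x 1)
  have hf : LipschitzWith 1 f := by
    apply LipschitzWith.of_dist_le_mul
    intro x y
    simp only [f, Prod.dist_eq, NNReal.coe_one, one_mul]
    rw [dist_eq_norm x y]
    apply max_le
    · simpa [Real.dist_eq] using PiLp.norm_apply_le (x - y) 0
    · simpa [Real.dist_eq] using PiLp.norm_apply_le (x - y) 1
  have h1 := hf.hausdorffMeasure_image_le (d := 2) (by norm_num) (sphere 0 r)
  rw [h, mul_zero, hausdorffMeasure_prod_real] at h1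
  have h2 : ball (0 : ℝ × ℝ) (r / 2) ⊆ f '' sphere 0 r := by
    rintro ⟨a, b⟩ hab
    rw [mem_ball, dist_zero_right, Prod.norm_def, max_lt_iff] at hab
    simp only [Real.norm_eq_abs, abs_lt] at hab
    obtain ⟨⟨h1, h2⟩, h3, h4⟩ := hab
    have h5 : 0 ≤ r ^ 2 - a ^ 2 - b ^ 2 := by nlinarith
    refine ⟨!₂[a, b, √(r ^ 2 - a ^ 2 - b ^ 2)], ?_, by simp [f]⟩
    rw [mem_sphere, dist_zero_right]
    apply (pow_left_inj₀ (norm_nonneg _) hr.le two_ne_zero).1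
    rw [arch_norm_sq]
    simp [Real.sq_sqrt h5]
  have h3 : 0 < volume (ball (0 : ℝ × ℝ) (r / 2)) :=
    isOpen_ball.measure_pos _ ⟨0, mem_ball_self (by linarith)⟩
  exact absurd (h3.trans_le ((measure_mono h2).trans h1)) (by simp)

theorem arch_sphere_fin (r : ℝ) (hr : 0 < r) : (μH[2] : Measure (EuclideanSpace ℝ (Fin 3))) (sphere 0 r) ≠ ⊤ := by
  let f : ℝ × ℝ → (EuclideanSpace ℝ (Fin 3)) := fun p => !₂[2 * r * p.1 / (1 + p.1 ^ 2 + p.2 ^ 2),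
    2 * r * p.2 / (1 + p.1 ^ 2 + p.2 ^ 2), r * (1 - p.1 ^ 2 - p.2 ^ 2) / (1 + p.1 ^ 2 + p.2 ^ 2)]
  have hd : ∀ p : ℝ × ℝ, 1 + p.1 ^ 2 + p.2 ^ 2 ≠ 0 := fun p => by positivity
  have hf : ContDiff ℝ 1 f := by
    rw [contDiff_euclidean]
    intro i
    fin_cases i <;> simp [f] <;> apply ContDiff.div _ _ hd <;> fun_prop
  obtain ⟨K, hK⟩ := hf.contDiffOn.exists_lipschitzOnWith one_ne_zero
    (convex_closedBall (0 : ℝ × ℝ) 1) (isCompact_closedBall _ _)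
  have h1 := hK.hausdorffMeasure_image_le (d := 2) (by norm_num)
  rw [hausdorffMeasure_prod_real] at h1
  have h2 : (μH[2] : Measure (EuclideanSpace ℝ (Fin 3))) (f '' closedBall 0 1) < ⊤ :=
    h1.trans_lt (ENNReal.mul_lt_top (by simp) measure_closedBall_lt_top)
  have h3 : (μH[2] : Measure (EuclideanSpace ℝ (Fin 3))) ((fun x => -x) ⁻¹' (f '' closedBall 0 1)) < ⊤ := by
    have := (IsometryEquiv.neg (EuclideanSpace ℝ (Fin 3))).hausdorffMeasure_preimage 2 (f '' closedBall 0 1)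
    exact lt_of_eq_of_lt this h2
  have key : ∀ x : (EuclideanSpace ℝ (Fin 3)), ‖x‖ = r → 0 ≤ x 2 → x ∈ f '' closedBall 0 1 := by
    intro x hx h0
    have hs := arch_norm_sq x
    rw [hx] at hs
    have hp : 0 < r + x 2 := by linarith
    have hD : 1 + (x 0 / (r + x 2)) ^ 2 + (x 1 / (r + x 2)) ^ 2 = 2 * r / (r + x 2) := by
      field_simp
      linarith
    have hD' : 1 - (x 0 / (r + x 2)) ^ 2 - (x 1 / (r + x 2)) ^ 2 = 2 * x 2 / (r + x 2) := by
      field_simp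
      linarith
    refine ⟨(x 0 / (r + x 2), x 1 / (r + x 2)), ?_, ?_⟩
    · have h4 : |x 0| ≤ r + x 2 := abs_le_of_sq_le_sq (by nlinarith [sq_nonneg (x 1)]) hp.le
      have h5 : |x 1| ≤ r + x 2 := abs_le_of_sq_le_sq (by nlinarith [sq_nonneg (x 0)]) hp.le
      rw [mem_closedBall, dist_zero_right, Prod.norm_def]
      simp only [Real.norm_eq_abs, abs_div, abs_of_pos hp]
      exact max_le ((div_le_one hp).2 h4) ((div_le_one hp).2 h5)
    · ext i
      fin_cases i <;> simp [f, hD, hD'] <;> field_simp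
  have h4 : sphere (0 : (EuclideanSpace ℝ (Fin 3))) r ⊆ f '' closedBall 0 1 ∪ (fun x => -x) ⁻¹' (f '' closedBall 0 1) := by
    intro x hx
    rw [mem_sphere, dist_zero_right] at hx
    rcases le_total 0 (x 2) with h | h
    · exact Or.inl (key x hx h)
    · exact Or.inr (key (-x) (by simpa using hx) (by simpa using h))
  exact ((measure_mono h4).trans_lt ((measure_union_le _ _).trans_lt
    (ENNReal.add_lt_top.2 ⟨h2, h3⟩))).ne

theorem arch_cap_eq (κ : Measure (EuclideanSpace ℝ (Fin 3))) (hκ : ∀ e : (EuclideanSpace ℝ (Fin 3)) ≃ₗᵢ[ℝ] (EuclideanSpace ℝ (Fin 3)), MeasurePreserving e κ κ)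
    (t : ℝ) (y : (EuclideanSpace ℝ (Fin 3))) (hy : y ≠ 0) :
    κ {x | t * (‖x‖ * ‖y‖) < inner ℝ x y} = κ {x | t * ‖x‖ < x 2} := by
  let u : (EuclideanSpace ℝ (Fin 3)) := EuclideanSpace.single 2 1
  have hn : 0 < ‖y‖ := norm_pos_iff.2 hy
  have hv : ‖‖y‖⁻¹ • y‖ = ‖u‖ := by
    rw [norm_smul, norm_inv, norm_norm, inv_mul_cancel₀ hn.ne']; simp [u]
  let e := (Submodule.span ℝ {‖y‖⁻¹ • y - u})ᗮ.reflection
  have he : e (‖y‖⁻¹ • y) = u := Submodule.reflection_sub hv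
  have hms : MeasurableSet {x : (EuclideanSpace ℝ (Fin 3)) | t * ‖x‖ < x 2} :=
    (isOpen_lt (by fun_prop) (by fun_prop)).measurableSet
  rw [← (hκ e).measure_preimage hms.nullMeasurableSet]
  congr 1
  ext x
  have h1 : (e x) 2 = inner ℝ x (‖y‖⁻¹ • y) := by
    rw [← e.inner_map_map x, he]; simp [u, EuclideanSpace.inner_single_right]
  simp only [Set.mem_ofPred_eq, Set.mem_preimage, h1, e.norm_map, inner_smul_right]
  rw [← div_eq_inv_mul, lt_div_iff₀ hn, mul_assoc]

theorem arch_swap (μ ν : Measure (EuclideanSpace ℝ (Fin 3))) [IsFiniteMeasure μ] [IsFiniteMeasure ν]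
    (hμ : ∀ e : (EuclideanSpace ℝ (Fin 3)) ≃ₗᵢ[ℝ] (EuclideanSpace ℝ (Fin 3)), MeasurePreserving e μ μ)
    (hν : ∀ e : (EuclideanSpace ℝ (Fin 3)) ≃ₗᵢ[ℝ] (EuclideanSpace ℝ (Fin 3)), MeasurePreserving e ν ν)
    (hμ0 : ∀ᵐ x ∂μ, x ≠ 0) (hν0 : ∀ᵐ x ∂ν, x ≠ 0) (t : ℝ) :
    μ {x | t * ‖x‖ < x 2} * ν Set.univ = ν {x | t * ‖x‖ < x 2} * μ Set.univ := by
  have hms : MeasurableSet {p : (EuclideanSpace ℝ (Fin 3)) × (EuclideanSpace ℝ (Fin 3)) | t * (‖p.1‖ * ‖p.2‖) < inner ℝ p.1 p.2} :=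
    (isOpen_lt (by fun_prop) (by fun_prop)).measurableSet
  have h1 := Measure.prod_apply (μ := μ) (ν := ν) hms
  have h2 := Measure.prod_apply_symm (μ := μ) (ν := ν) hms
  rw [h1] at h2
  have e1 : ∫⁻ x, ν (Prod.mk x ⁻¹' {p : (EuclideanSpace ℝ (Fin 3)) × (EuclideanSpace ℝ (Fin 3)) | t * (‖p.1‖ * ‖p.2‖) < inner ℝ p.1 p.2}) ∂μ
      = ∫⁻ x, ν {x | t * ‖x‖ < x 2} ∂μ := by
    apply lintegral_congr_ae
    filter_upwards [hμ0] with x hx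
    rw [← arch_cap_eq ν hν t x hx]
    congr 1
    ext y
    simp only [Set.mem_preimage, Set.mem_ofPred_eq, mul_comm ‖x‖, real_inner_comm]
  have e2 : ∫⁻ y, μ ((fun x => (x, y)) ⁻¹' {p : (EuclideanSpace ℝ (Fin 3)) × (EuclideanSpace ℝ (Fin 3)) | t * (‖p.1‖ * ‖p.2‖) < inner ℝ p.1 p.2}) ∂ν
      = ∫⁻ x, μ {x | t * ‖x‖ < x 2} ∂ν := by
    apply lintegral_congr_ae
    filter_upwards [hν0] with x hx
    rw [← arch_cap_eq μ hμ t x hx]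
    rfl
  rw [e1, e2, lintegral_const, lintegral_const] at h2
  exact h2.symm

theorem arch_disc (c : ℝ) (hc : 0 ≤ c) :
    volume {w : Fin 2 → ℝ | w 0 ^ 2 + w 1 ^ 2 < c} = ENNReal.ofReal (Real.pi * c) := by
  have hms : MeasurableSet {w : Fin 2 → ℝ | w 0 ^ 2 + w 1 ^ 2 < c} :=
    (isOpen_lt (by fun_prop) (by fun_prop)).measurableSet
  rw [← (PiLp.volume_preserving_ofLp (Fin 2)).measure_preimage hms.nullMeasurableSet]
  have : (@WithLp.ofLp 2 (Fin 2 → ℝ)) ⁻¹' {w : Fin 2 → ℝ | w 0 ^ 2 + w 1 ^ 2 < c}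
      = ball (0 : EuclideanSpace ℝ (Fin 2)) (√c) := by
    ext x
    rw [mem_ball, dist_zero_right, Real.lt_sqrt (norm_nonneg _), EuclideanSpace.real_norm_sq_eq,
      Fin.sum_univ_two]
    rfl
  rw [this, EuclideanSpace.volume_ball_fin_two, ← ENNReal.ofReal_pow (Real.sqrt_nonneg _),
    Real.sq_sqrt hc, ← ENNReal.ofReal_mul hc, mul_comm]

theorem arch_slice (t z : ℝ) (ht0 : 0 ≤ t) (ht1 : t < 1) :
    volume {w : Fin 2 → ℝ | 0 < z ∧ t ^ 2 * (w 0 ^ 2 + w 1 ^ 2 + z ^ 2) < z ^ 2 ∧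
        w 0 ^ 2 + w 1 ^ 2 + z ^ 2 < 1} =
      (Set.Ioc 0 t).indicator
        (fun z => ENNReal.ofReal (Real.pi * (z ^ 2 * ((t ^ 2)⁻¹ - 1)))) z +
      (Set.Ioc t 1).indicator (fun z => ENNReal.ofReal (Real.pi * (1 - z ^ 2))) z := by
  by_cases h0 : 0 < z
  swap
  · have h1 : z ∉ Set.Ioc 0 t := fun h => h0 h.1
    have h2 : z ∉ Set.Ioc t 1 := fun h => h0 (ht0.trans_lt h.1)
    simp [h0, h1, h2]
  by_cases h1 : z ≤ t
  · have ht : 0 < t := h0.trans_le h1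
    have hi : 0 ≤ (t ^ 2)⁻¹ - 1 := by
      rw [sub_nonneg]; exact (one_le_inv₀ (by positivity)).2 (by nlinarith)
    rw [Set.indicator_of_mem (show z ∈ Set.Ioc 0 t from ⟨h0, h1⟩),
      Set.indicator_of_notMem (show z ∉ Set.Ioc t 1 from fun h => not_le.2 h.1 h1), add_zero,
      ← arch_disc _ (by positivity)]
    congr 1
    ext w
    simp only [Set.mem_ofPred_eq]
    have e : z ^ 2 * ((t ^ 2)⁻¹ - 1) = z ^ 2 / t ^ 2 - z ^ 2 := by ring
    have hz : z ^ 2 / t ^ 2 ≤ 1 := (div_le_one (by positivity)).2 (by nlinarith)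
    have hl : t ^ 2 * (w 0 ^ 2 + w 1 ^ 2 + z ^ 2) < z ^ 2 ↔
        w 0 ^ 2 + w 1 ^ 2 + z ^ 2 < z ^ 2 / t ^ 2 := by
      rw [lt_div_iff₀ (by positivity), mul_comm]
    rw [e, hl]
    constructor
    · rintro ⟨-, h, -⟩; linarith
    · intro h; exact ⟨h0, by linarith, by linarith⟩
  · rw [not_le] at h1
    rw [Set.indicator_of_notMem (show z ∉ Set.Ioc 0 t from fun h => not_le.2 h1 h.2), zero_add]
    by_cases h2 : z ≤ 1
    · rw [Set.indicator_of_mem (show z ∈ Set.Ioc t 1 from ⟨h1, h2⟩),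
        ← arch_disc _ (by nlinarith)]
      congr 1
      ext w
      simp only [Set.mem_ofPred_eq]
      constructor
      · rintro ⟨-, -, h⟩; linarith
      · intro h
        have h3 : w 0 ^ 2 + w 1 ^ 2 + z ^ 2 < 1 := by linarith
        refine ⟨h0, ?_, h3⟩
        nlinarith [mul_le_mul_of_nonneg_left h3.le (sq_nonneg t)]
    · rw [Set.indicator_of_notMem (show z ∉ Set.Ioc t 1 from fun h => h2 h.2)]
      convert measure_empty (μ := (volume : Measure (Fin 2 → ℝ)))
      ext w
      simp only [Set.mem_ofPred_eq, Set.mem_empty_iff_false, iff_false]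
      rintro ⟨-, -, h⟩
      nlinarith [sq_nonneg (w 0), sq_nonneg (w 1)]

theorem arch_lint (a b : ℝ) (hab : a ≤ b) (f : ℝ → ℝ) (hf : Continuous f)
    (h0 : ∀ z ∈ Set.Ioc a b, 0 ≤ f z) :
    ∫⁻ z, (Set.Ioc a b).indicator (fun z => ENNReal.ofReal (f z)) z =
      ENNReal.ofReal (∫ z in a..b, f z) := by
  rw [lintegral_indicator measurableSet_Ioc, intervalIntegral.integral_of_le hab,
    ofReal_integral_eq_lintegral_ofReal]
  · exact (hf.intervalIntegrable a b).1
  · exact (ae_restrict_iff' measurableSet_Ioc).2 (Filter.Eventually.of_forall h0)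

theorem arch_cone (t : ℝ) (ht0 : 0 ≤ t) (ht1 : t < 1) :
    (volume.restrict (ball (0 : (EuclideanSpace ℝ (Fin 3))) 1)) {x | t * ‖x‖ < x 2} =
      ENNReal.ofReal (2 * Real.pi / 3 * (1 - t)) := by
  let D : Set (ℝ × (Fin 2 → ℝ)) := {p | 0 < p.1 ∧
    t ^ 2 * (p.2 0 ^ 2 + p.2 1 ^ 2 + p.1 ^ 2) < p.1 ^ 2 ∧ p.2 0 ^ 2 + p.2 1 ^ 2 + p.1 ^ 2 < 1}
  have hD : MeasurableSet D := by
    have o1 : IsOpen {p : ℝ × (Fin 2 → ℝ) | 0 < p.1} := isOpen_lt (by fun_prop) (by fun_prop)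
    have o2 : IsOpen {p : ℝ × (Fin 2 → ℝ) |
        t ^ 2 * (p.2 0 ^ 2 + p.2 1 ^ 2 + p.1 ^ 2) < p.1 ^ 2} :=
      isOpen_lt (by fun_prop) (by fun_prop)
    have o3 : IsOpen {p : ℝ × (Fin 2 → ℝ) | p.2 0 ^ 2 + p.2 1 ^ 2 + p.1 ^ 2 < 1} :=
      isOpen_lt (by fun_prop) (by fun_prop)
    exact (o1.inter (o2.inter o3)).measurableSet
  have hms : MeasurableSet {x : (EuclideanSpace ℝ (Fin 3)) | t * ‖x‖ < x 2} :=
    (isOpen_lt (by fun_prop) (by fun_prop)).measurableSet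
  have hφ := (volume_preserving_piFinSuccAbove (fun _ : Fin 3 => ℝ) 2).comp
    (PiLp.volume_preserving_ofLp (Fin 3))
  have hC : {x : (EuclideanSpace ℝ (Fin 3)) | t * ‖x‖ < x 2} ∩ ball 0 1 =
      (MeasurableEquiv.piFinSuccAbove (fun _ : Fin 3 => ℝ) 2 ∘ WithLp.ofLp) ⁻¹' D := by
    ext x
    have e : x ∈ (MeasurableEquiv.piFinSuccAbove (fun _ : Fin 3 => ℝ) 2 ∘ WithLp.ofLp) ⁻¹' D ↔
      0 < x 2 ∧ t ^ 2 * (x 0 ^ 2 + x 1 ^ 2 + x 2 ^ 2) < x 2 ^ 2 ∧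
        x 0 ^ 2 + x 1 ^ 2 + x 2 ^ 2 < 1 := Iff.rfl
    rw [e, ← arch_norm_sq, Set.mem_inter_iff, mem_ball, dist_zero_right, sq_lt_one_iff₀ (norm_nonneg _),
      ← mul_pow, Set.mem_ofPred_eq, ← and_assoc]
    refine and_congr_left fun _ => ?_
    have hp : 0 ≤ t * ‖x‖ := by positivity
    constructor
    · intro h; exact ⟨hp.trans_lt h, pow_lt_pow_left₀ h hp two_ne_zero⟩
    · rintro ⟨h, h'⟩; exact lt_of_pow_lt_pow_left₀ 2 h.le h'
  rw [Measure.restrict_apply hms, hC, hφ.measure_preimage hD.nullMeasurableSet,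
    Measure.volume_eq_prod, Measure.prod_apply hD]
  have : ∀ z : ℝ, volume (Prod.mk z ⁻¹' D) = _ := fun z => arch_slice t z ht0 ht1
  simp_rw [this]
  have hi : 0 ≤ (t ^ 2)⁻¹ - 1 ∨ t = 0 := by
    rcases ht0.eq_or_lt with h | h
    · exact Or.inr h.symm
    · left; rw [sub_nonneg]; exact (one_le_inv₀ (by positivity)).2 (by nlinarith)
  have h1 : ∀ z ∈ Set.Ioc 0 t, 0 ≤ Real.pi * (z ^ 2 * ((t ^ 2)⁻¹ - 1)) := by
    rintro z ⟨hz, hz'⟩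
    rcases hi with h | h
    · have := Real.pi_pos; positivity
    · linarith
  have h2 : ∀ z ∈ Set.Ioc t 1, 0 ≤ Real.pi * (1 - z ^ 2) := by
    rintro z ⟨hz, hz'⟩
    have := Real.pi_pos
    have : 0 ≤ 1 - z ^ 2 := by nlinarith
    positivity
  rw [lintegral_add_left, arch_lint 0 t ht0 _ (by fun_prop) h1, arch_lint t 1 ht1.le _ (by fun_prop) h2,
    ← ENNReal.ofReal_add]
  · congr 1
    have i1 : ∫ z in (0 : ℝ)..t, Real.pi * (z ^ 2 * ((t ^ 2)⁻¹ - 1)) =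
        Real.pi * (t ^ 3 / 3 * ((t ^ 2)⁻¹ - 1)) := by
      rw [intervalIntegral.integral_const_mul, intervalIntegral.integral_mul_const, integral_pow]
      norm_num
    have i2 : ∫ z in t..1, Real.pi * (1 - z ^ 2) = Real.pi * ((1 - t) - (1 - t ^ 3) / 3) := by
      rw [intervalIntegral.integral_const_mul, intervalIntegral.integral_sub (by simp)
        (Continuous.intervalIntegrable (by fun_prop) _ _), integral_pow]
      norm_num
    rw [i1, i2]
    rcases ht0.eq_or_lt with h | h
    · rw [← h]; norm_num; ring
    · field_simp; ring
  · rw [intervalIntegral.integral_of_le ht0]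
    exact setIntegral_nonneg measurableSet_Ioc h1
  · rw [intervalIntegral.integral_of_le ht1.le]
    exact setIntegral_nonneg measurableSet_Ioc h2
  · exact Measurable.indicator (by fun_prop) measurableSet_Ioc

theorem arch_real (P : Measure ℝ) [IsProbabilityMeasure P] (r : ℝ) (hr : 0 < r)
    (hP : ∀ a, 0 ≤ a → P.real (Set.Ioi a) = (r - min a r) / (2 * r))
    (hs : ∀ a, P.real (Set.Iic a) = P.real (Set.Ici (-a))) :
    P = (ENNReal.ofReal (2 * r))⁻¹ • (volume.restrict (Set.Icc (-r) r)) := by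
  apply Measure.ext_of_Iic
  intro a
  have hU : ((ENNReal.ofReal (2 * r))⁻¹ • (volume.restrict (Set.Icc (-r) r))) (Set.Iic a)
      = ENNReal.ofReal ((min a r + r) / (2 * r)) := by
    rw [Measure.smul_apply, Measure.restrict_apply measurableSet_Iic]
    have : Set.Iic a ∩ Set.Icc (-r) r = Set.Icc (-r) (min a r) := by
      ext x; simp only [Set.mem_inter_iff, Set.mem_Iic, Set.mem_Icc, le_min_iff]; tauto
    rw [this, Real.volume_Icc, smul_eq_mul, sub_neg_eq_add,
      ENNReal.ofReal_div_of_pos (by linarith), ENNReal.div_eq_inv_mul]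
  rw [hU, ← ofReal_measureReal]
  rcases le_or_gt 0 a with ha | ha
  · congr 1
    rw [← Set.compl_Ioi, probReal_compl_eq_one_sub measurableSet_Ioi, hP a ha]
    field_simp
    ring
  · rw [hs]
    have hI : P.real (Set.Ici (-a)) = (r - min (-a) r) / (2 * r) := by
      apply le_antisymm
      · have ht : Filter.Tendsto (fun b : ℝ => (r - min b r) / (2 * r)) (nhdsWithin (-a) (Set.Iio (-a)))
            (nhds ((r - min (-a) r) / (2 * r))) :=
          (Continuous.tendsto (by fun_prop) (-a)).mono_left nhdsWithin_le_nhds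
        apply ge_of_tendsto ht
        filter_upwards [Ioo_mem_nhdsLT (show (0 : ℝ) < -a by linarith)] with b hb
        rw [← hP b hb.1.le]
        exact measureReal_mono (fun x hx => hb.2.trans_le hx)
      · rw [← hP (-a) (by linarith)]
        exact measureReal_mono Set.Ioi_subset_Ici_self
    rw [hI]
    rcases le_total (-a) r with h | h
    · rw [min_eq_left h, min_eq_left (by linarith)]; congr 2; ring
    · rw [min_eq_right h, min_eq_left (by linarith)]
      rw [ENNReal.ofReal_of_nonpos (by simp), ENNReal.ofReal_of_nonpos]
      exact div_nonpos_of_nonpos_of_nonneg (by linarith) (by linarith)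

theorem arch_restrict_mp (κ : Measure (EuclideanSpace ℝ (Fin 3))) (e : (EuclideanSpace ℝ (Fin 3)) ≃ₗᵢ[ℝ] (EuclideanSpace ℝ (Fin 3))) (h : MeasurePreserving e κ κ)
    (s : Set (EuclideanSpace ℝ (Fin 3))) (hs : MeasurableSet s) (hse : e ⁻¹' s = s) :
    MeasurePreserving e (κ.restrict s) (κ.restrict s) := by
  have := h.restrict_preimage hs
  rwa [hse] at this

theorem archimedes_projection_uniform (r : ℝ) (hr : 0 < r) :
    Measure.map (fun x : EuclideanSpace ℝ (Fin 3) => x 2)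
        (((μH[2] : Measure (EuclideanSpace ℝ (Fin 3)))
            (sphere (0 : EuclideanSpace ℝ (Fin 3)) r))⁻¹
          • ((μH[2] : Measure (EuclideanSpace ℝ (Fin 3))).restrict
              (sphere (0 : EuclideanSpace ℝ (Fin 3)) r)))
      = (ENNReal.ofReal (2 * r))⁻¹ • (volume.restrict (Set.Icc (-r) r)) := by
  have hpos := arch_sphere_pos r hr
  have hfin := arch_sphere_fin r hr
  set μ : Measure (EuclideanSpace ℝ (Fin 3)) := (μH[2] : Measure (EuclideanSpace ℝ (Fin 3))).restrict (sphere 0 r) with hμdef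
  have huniv : μ Set.univ = (μH[2] : Measure (EuclideanSpace ℝ (Fin 3))) (sphere 0 r) := by simp [hμdef]
  rw [← huniv] at hpos hfin ⊢
  have : IsFiniteMeasure μ := ⟨hfin.lt_top⟩
  have hx : Measurable (fun x : (EuclideanSpace ℝ (Fin 3)) => x 2) := by fun_prop
  have hS : ∀ᵐ x ∂μ, ‖x‖ = r := by
    filter_upwards [ae_restrict_mem (isClosed_sphere.measurableSet)] with x hx
    simpa using hx
  have hμ : ∀ e : (EuclideanSpace ℝ (Fin 3)) ≃ₗᵢ[ℝ] (EuclideanSpace ℝ (Fin 3)), MeasurePreserving e μ μ := fun e =>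
    arch_restrict_mp _ e (e.toIsometryEquiv.measurePreserving_hausdorffMeasure 2) _
      isClosed_sphere.measurableSet (by ext x; simp)
  let ν : Measure (EuclideanSpace ℝ (Fin 3)) := volume.restrict (ball 0 1)
  have : IsFiniteMeasure ν := ⟨by simp [ν]⟩
  have hν : ∀ e : (EuclideanSpace ℝ (Fin 3)) ≃ₗᵢ[ℝ] (EuclideanSpace ℝ (Fin 3)), MeasurePreserving e ν ν := fun e =>
    arch_restrict_mp _ e e.measurePreserving _ measurableSet_ball (by ext x; simp)
  have hν0 : ∀ᵐ x ∂ν, x ≠ 0 := ae_restrict_of_ae (Measure.ae_ne volume 0)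
  have hμ0 : ∀ᵐ x ∂μ, x ≠ 0 := by
    filter_upwards [hS] with x hx h
    rw [h, norm_zero] at hx
    exact hr.ne hx
  have hνu : ν Set.univ = ENNReal.ofReal (4 * Real.pi / 3) := by
    simp [ν]; congr 1; ring
  have hsm : IsProbabilityMeasure ((μ Set.univ)⁻¹ • μ) :=
    ⟨by rw [Measure.smul_apply, smul_eq_mul, ENNReal.inv_mul_cancel hpos hfin]⟩
  have hprob := Measure.isProbabilityMeasure_map (μ := (μ Set.univ)⁻¹ • μ) hx.aemeasurable
  have hap : ∀ s, MeasurableSet s → (Measure.map (fun x : (EuclideanSpace ℝ (Fin 3)) => x 2) ((μ Set.univ)⁻¹ • μ)).real s =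
      (μ.real Set.univ)⁻¹ * μ.real ((fun x : (EuclideanSpace ℝ (Fin 3)) => x 2) ⁻¹' s) := by
    intro s hs
    rw [measureReal_def, Measure.map_apply hx hs, Measure.smul_apply, smul_eq_mul,
      ENNReal.toReal_mul, ENNReal.toReal_inv]
    rfl
  have hu0 : 0 < μ.real Set.univ := ENNReal.toReal_pos hpos hfin
  have hpi := Real.pi_pos
  apply arch_real _ r hr
  · intro a ha
    rw [hap _ measurableSet_Ioi]
    rcases lt_or_ge a r with har | har
    · have ht1 : a / r < 1 := (div_lt_one hr).2 har
      have hsw := arch_swap μ ν hμ hν hμ0 hν0 (a / r)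
      rw [hνu, arch_cone (a / r) (by positivity) ht1] at hsw
      have hcap : μ {x | a / r * ‖x‖ < x 2} = μ ((fun x : (EuclideanSpace ℝ (Fin 3)) => x 2) ⁻¹' Set.Ioi a) := by
        apply measure_congr
        filter_upwards [hS] with x hx
        apply propext
        change a / r * ‖x‖ < x 2 ↔ a < x 2
        rw [hx, div_mul_cancel₀ _ hr.ne']
      rw [hcap] at hsw
      have h3 := congrArg ENNReal.toReal hsw
      rw [ENNReal.toReal_mul, ENNReal.toReal_mul, ENNReal.toReal_ofReal (by positivity),
        ENNReal.toReal_ofReal (mul_nonneg (by positivity) (by linarith)),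
        ← measureReal_def, ← measureReal_def] at h3
      rw [min_eq_left har.le]
      have h4 : μ.real ((fun x : (EuclideanSpace ℝ (Fin 3)) => x 2) ⁻¹' Set.Ioi a) = (1 - a / r) / 2 * μ.real Set.univ := by
        apply mul_right_cancel₀ (show 4 * Real.pi / 3 ≠ 0 by positivity)
        rw [h3]; ring
      rw [h4]
      field_simp
    · have h0 : μ ((fun x : (EuclideanSpace ℝ (Fin 3)) => x 2) ⁻¹' Set.Ioi a) = 0 := by
        rw [measure_eq_zero_iff_ae_notMem]
        filter_upwards [hS] with x hx hxa
        have h1 := PiLp.norm_apply_le x 2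
        rw [hx, Real.norm_eq_abs] at h1
        have h2 : a < x 2 := hxa
        linarith [le_abs_self (x 2)]
      rw [measureReal_def μ (_ ⁻¹' _), h0, min_eq_right har]
      simp
  · intro a
    rw [hap _ measurableSet_Iic, hap _ measurableSet_Ici]
    congr 1
    rw [measureReal_def, measureReal_def,
      ← (hμ (LinearIsometryEquiv.neg ℝ)).measure_preimage (hx measurableSet_Ici).nullMeasurableSet]
    congr 2
    ext x
    simp
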